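/- Let q be a prime power with q ≥ 5. Set G = C_3 ∗ C_3 and H = PSL(2,q). Then H is a homomorphic image of G (there is a surjective group homomorphism G → H), and there exists a generating pair (h1,h2) of H such that for every group homomorphism θ : G → H and every generating pair (g1,g2) of G one has (θ(g1), θ(g2)) ≠ (h1,h2). -/

import Mathlib

/-- `SL(2,F)` -/
abbrev SL2 (F : Type) [Field F] : Type := Matrix.SpecialLinearGroup (Fin 2) F

/-- `PSL(2,F)`, the quotient of `SL(2,F)` by its centre `{±I}`. -/
abbrev PSL2 (F : Type) [Field F] : Type := SL2 F ⧸ Subgroup.center (SL2 F)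

/-- The cyclic group of order `m`. -/
abbrev Cyc (m : ℕ) : Type := Multiplicative (ZMod m)


/-- the matrix with the given entries lies in the subgroup -/
def InK {F : Type} [Field F] (K : Subgroup (SL2 F)) (a b c d : F) : Prop :=
  ∃ g ∈ K, g.1 0 0 = a ∧ g.1 0 1 = b ∧ g.1 1 0 = c ∧ g.1 1 1 = d

section gen
variable {F : Type} [Field F] {K : Subgroup (SL2 F)}

theorem sl2_det (g : SL2 F) : g.1 0 0 * g.1 1 1 - g.1 0 1 * g.1 1 0 = 1 := by
  have := g.2
  rwa [Matrix.det_fin_two] at this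

theorem sl2_ext (g h : SL2 F) (h1 : g.1 0 0 = h.1 0 0) (h2 : g.1 0 1 = h.1 0 1)
    (h3 : g.1 1 0 = h.1 1 0) (h4 : g.1 1 1 = h.1 1 1) : g = h := by
  apply Subtype.ext
  ext i j
  fin_cases i <;> fin_cases j <;> assumption

theorem InK.mem {g : SL2 F} (h : InK K (g.1 0 0) (g.1 0 1) (g.1 1 0) (g.1 1 1)) : g ∈ K := by
  obtain ⟨k, hk, h1, h2, h3, h4⟩ := h
  rwa [sl2_ext g k h1.symm h2.symm h3.symm h4.symm]

theorem InK.of_mem {g : SL2 F} (h : g ∈ K) : InK K (g.1 0 0) (g.1 0 1) (g.1 1 0) (g.1 1 1) :=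
  ⟨g, h, rfl, rfl, rfl, rfl⟩

theorem InK.det {a b c d : F} (h : InK K a b c d) : a * d - b * c = 1 := by
  obtain ⟨g, hg, rfl, rfl, rfl, rfl⟩ := h
  exact sl2_det g

theorem InK.mul {a b c d a' b' c' d' : F} (h : InK K a b c d) (h' : InK K a' b' c' d') :
    InK K (a * a' + b * c') (a * b' + b * d') (c * a' + d * c') (c * b' + d * d') := by
  obtain ⟨g, hg, rfl, rfl, rfl, rfl⟩ := h
  obtain ⟨k, hk, rfl, rfl, rfl, rfl⟩ := h'
  refine ⟨g * k, mul_mem hg hk, ?_, ?_, ?_, ?_⟩ <;>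
    simp [Matrix.mul_apply, Fin.sum_univ_two]

theorem InK.inv {a b c d : F} (h : InK K a b c d) : InK K d (-b) (-c) a := by
  obtain ⟨g, hg, rfl, rfl, rfl, rfl⟩ := h
  refine ⟨g⁻¹, inv_mem hg, ?_, ?_, ?_, ?_⟩ <;>
    simp [Matrix.SpecialLinearGroup.coe_inv, Matrix.adjugate_fin_two]

theorem InK.one : InK K 1 0 0 1 := ⟨1, one_mem _, by simp, by simp, by simp, by simp⟩

theorem InK.cast {a b c d a' b' c' d' : F} (h : InK K a b c d) (h1 : a = a') (h2 : b = b')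
    (h3 : c = c') (h4 : d = d') : InK K a' b' c' d' := by
  subst h1 h2 h3 h4; exact h

theorem top_of_U (hU : ∀ x, InK K 1 x 0 1) {a b c d : F} (h : InK K a b c d) (hc : c ≠ 0) :
    K = ⊤ := by
  have hdet := h.det
  have W : InK K 0 (-c⁻¹) c 0 := by
    refine (((hU (-a/c)).mul h).mul (hU (-d/c))).cast ?_ ?_ ?_ ?_ <;> field_simp <;>
      first | ring1 | linear_combination -hdet
  have hL : ∀ y, InK K 1 0 y 1 := by
    intro y
    refine ((W.mul (hU (-y/c^2))).mul W.inv).cast ?_ ?_ ?_ ?_ <;> field_simp <;> ring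
  have key : ∀ g : SL2 F, g.1 1 0 ≠ 0 → g ∈ K := by
    intro g hg
    apply InK.mem
    have hd := sl2_det g
    generalize g.1 0 0 = α at *
    generalize g.1 0 1 = β at *
    generalize g.1 1 0 = γ at *
    generalize g.1 1 1 = δ at *
    refine (((hU ((α-1)/γ)).mul (hL γ)).mul (hU ((δ-1)/γ))).cast ?_ ?_ ?_ ?_ <;> field_simp <;>
      first | ring1 | linear_combination hd
  rw [eq_top_iff]
  intro g _
  by_cases hg : g.1 1 0 = 0
  · obtain ⟨l, hl, l1, l2, l3, l4⟩ := hL 1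
    have : g * l ∈ K := by
      apply key
      have hd := sl2_det g
      simp only [Matrix.SpecialLinearGroup.coe_mul, Matrix.mul_apply, Fin.sum_univ_two]
      rw [l1, l3, hg]
      intro h0
      have : g.1 1 1 = 0 := by linear_combination h0
      rw [hg, this] at hd
      simp at hd
    simpa using mul_mem this (inv_mem hl)
  · exact key g hg

/-- parameters of upper unipotents in K -/
def Uset (K : Subgroup (SL2 F)) : AddSubgroup F where
  carrier := {x | InK K 1 x 0 1}
  zero_mem' := InK.one
  add_mem' := by
    intro x y hx hy
    exact (InK.mul hx hy).cast (by ring) (by ring) (by ring) (by ring)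
  neg_mem' := by
    intro x hx
    exact (InK.inv hx).cast rfl rfl (by ring) rfl

theorem top_prime (hp : (Nat.card F).Prime) {x : F} (hx : x ≠ 0) (hU : InK K 1 x 0 1)
    {a b c d : F} (h : InK K a b c d) (hc : c ≠ 0) : K = ⊤ := by
  apply top_of_U _ h hc
  have := Fact.mk hp
  rcases (Uset K).eq_bot_or_eq_top_of_prime_card with h0 | h0
  · exfalso
    have : x ∈ Uset K := hU
    rw [h0] at this
    exact hx (by simpa using this)
  · intro y
    have : y ∈ Uset K := by rw [h0]; trivial
    exact this

theorem top_torus [Finite F] (hT : ∀ t : F, t ≠ 0 → InK K t 0 0 t⁻¹) {x : F} (hx : x ≠ 0)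
    (hU : InK K 1 x 0 1) {a b c d : F} (h : InK K a b c d) (hc : c ≠ 0) : K = ⊤ := by
  apply top_of_U _ h hc
  have hsq : ∀ t, x * t^2 ∈ Uset K := by
    intro t
    by_cases ht : t = 0
    · simp [ht]
    · show InK K _ _ _ _
      refine (((hT t ht).mul hU).mul (hT t ht).inv).cast ?_ ?_ ?_ ?_ <;> field_simp <;> ring
  intro y
  show y ∈ Uset K
  by_cases h2 : (2 : F) = 0
  · have : ringChar F = 2 := by
      have := ringChar.dvd (R := F) (x := 2) (by exact_mod_cast h2)
      rcases (Nat.dvd_prime Nat.prime_two).1 this with h | h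
      · exact absurd h (CharP.ringChar_ne_one)
      · exact h
    obtain ⟨s, hs⟩ := FiniteField.isSquare_of_char_two this (y / x)
    have := hsq s
    have e : x * s^2 = y := by
      rw [pow_two, ← hs]; field_simp
    rwa [e] at this
  · have := sub_mem (hsq ((y/x+1)/2)) (hsq ((y/x-1)/2))
    have e : x * ((y/x+1)/2)^2 - x * ((y/x-1)/2)^2 = y := by
      field_simp; ring
    rwa [e] at this

theorem exists_U (hT : ∀ t : F, t ≠ 0 → InK K t 0 0 t⁻¹) {a b c d a' b' c' d' : F}
    (h : InK K a b c d) (h' : InK K a' b' c' d') (ha : a ≠ 0) (hc : c ≠ 0) (ha' : a' ≠ 0)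
    (hc' : c' ≠ 0) (hs : IsSquare (a * c * (a' * c'))) (hne : b * c ≠ b' * c') :
    ∃ x, x ≠ 0 ∧ InK K 1 x 0 1 := by
  obtain ⟨r, hr⟩ := hs
  have hr0 : r ≠ 0 := by
    rintro rfl
    simp [ha, hc, ha', hc'] at hr
  set τ := r / (a * c') with hτ
  have hτ0 : τ ≠ 0 := by simp [hτ, hr0, ha, hc']
  have hτ2 : τ^2 * a * c' = a' * c := by
    rw [hτ]; field_simp; linear_combination -hr
  have d1 := h.det
  have d2 := h'.det
  have m := h'.inv.mul ((hT τ hτ0).mul h)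
  have m1 := m.cast rfl rfl (c' := 0) (by field_simp; linear_combination -hτ2) rfl
  have m1d := m1.det
  generalize hα : (d' * (τ * a + 0 * c) + -b' * (0 * a + τ⁻¹ * c)) = α at *
  generalize hδ : (-c' * (τ * b + 0 * d) + a' * (0 * b + τ⁻¹ * d)) = δ at *
  generalize hβ : (d' * (τ * b + 0 * d) + -b' * (0 * b + τ⁻¹ * d)) = β at *
  have hαδ : α * δ = 1 := by linear_combination m1d
  have hα0 : α ≠ 0 := left_ne_zero_of_mul_eq_one hαδ
  refine ⟨α⁻¹ * β, ?_, ?_⟩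
  · intro h0
    have hβ0 : β = 0 := by simpa [hα0] using h0
    have e : τ^2 * b * d' = b' * d := by
      rw [hβ0] at hβ
      field_simp at hβ
      linear_combination hβ
    apply hne
    have : τ^2 * (a' * d' * (b * c) - a * d * (b' * c')) = 0 := by
      linear_combination (a' * c) * e - (b' * d) * hτ2
    have : (a' * d' * (b * c) - a * d * (b' * c')) = 0 := by simpa [hτ0] using this
    linear_combination this - b * c * d2 + b' * c' * d1
  · refine ((hT α⁻¹ (inv_ne_zero hα0)).mul m1).cast ?_ ?_ ?_ ?_
    · field_simp; ring
    · ring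
    · ring
    · rw [inv_inv]; linear_combination hαδ

theorem MtM (hT : ∀ t : F, t ≠ 0 → InK K t 0 0 t⁻¹) {a b c d : F} (h : InK K a b c d) {t : F}
    (ht : t ≠ 0) : InK K (a^2*t+b*c/t) (b*(a*t+d/t)) (c*(a*t+d/t)) (b*c*t+d^2/t) :=
  ((h.mul (hT t ht)).mul h).cast (by field_simp; ring) (by field_simp; ring)
    (by field_simp; ring) (by field_simp; ring)

theorem exists_eval_ne [Fintype F] (P : Polynomial F) (hP : P ≠ 0)
    (hd : P.natDegree < Fintype.card F) : ∃ t, P.eval t ≠ 0 := by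
  classical
  by_contra! hcon
  apply hP
  apply Polynomial.eq_zero_of_natDegree_lt_card_of_eval_eq_zero' P Finset.univ
  · intro i _; exact hcon i
  · simpa using hd

open Polynomial in
theorem quad_ne (a v d : F) (h : a ≠ 0 ∨ d ≠ 0) : (C a * X^2 + C v * X + C d : F[X]) ≠ 0 := by
  intro h0
  rcases h with h | h
  · apply h
    have := congrArg (fun p => p.coeff 2) h0
    simpa [coeff_X, coeff_C] using this
  · apply h
    have := congrArg (fun p => p.eval 0) h0
    simpa using this

open Polynomial in
theorem quad_deg (a v d : F) : (C a * X^2 + C v * X + C d : F[X]).natDegree ≤ 2 := by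
  compute_degree

/-- avoid finitely many quadratics -/
theorem avoid [Fintype F] (L : List (F × F × F)) (hL : ∀ p ∈ L, p.1 ≠ 0 ∨ p.2.2 ≠ 0)
    (hc : 2 * L.length + 1 < Fintype.card F) :
    ∃ t : F, t ≠ 0 ∧ ∀ p ∈ L, p.1 * t^2 + p.2.1 * t + p.2.2 ≠ 0 := by
  open Polynomial in
  let Q : F × F × F → F[X] := fun p => C p.1 * X^2 + C p.2.1 * X + C p.2.2
  let P : F[X] := X * (L.map Q).prod
  have hP : P ≠ 0 := by
    apply mul_ne_zero Polynomial.X_ne_zero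
    rw [Ne, List.prod_eq_zero_iff]
    simp only [List.mem_map, not_exists, not_and]
    intro p hp
    exact quad_ne _ _ _ (hL p hp)
  have hdeg : P.natDegree ≤ 2 * L.length + 1 := by
    refine Polynomial.natDegree_mul_le.trans ?_
    have : ((L.map Q).prod).natDegree ≤ 2 * L.length := by
      clear hL hc hP P
      induction L with
      | nil => simp
      | cons p L ih =>
        simp only [List.map_cons, List.prod_cons, List.length_cons]
        refine Polynomial.natDegree_mul_le.trans ?_
        have := quad_deg p.1 p.2.1 p.2.2
        have : (Q p).natDegree ≤ 2 := this
        omega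
    have h1 := Polynomial.natDegree_X_le (R := F)
    omega
  obtain ⟨t, ht⟩ := exists_eval_ne P hP (by omega)
  simp only [P, Polynomial.eval_mul, Polynomial.eval_X] at ht
  refine ⟨t, left_ne_zero_of_mul ht, ?_⟩
  intro p hp h0
  apply right_ne_zero_of_mul ht
  rw [Polynomial.eval_list_prod, List.prod_eq_zero_iff]
  simp only [List.mem_map]
  refine ⟨Q p, ⟨p, hp, rfl⟩, ?_⟩
  simpa [Q] using h0

theorem isSquare_of_three [Finite F] (x y z : F) (hx : x ≠ 0) (hy : y ≠ 0) (hz : z ≠ 0) :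
    IsSquare (x * y) ∨ IsSquare (x * z) ∨ IsSquare (y * z) := by
  classical
  have := Fintype.ofFinite F
  have key : ∀ u v : F, u ≠ 0 → v ≠ 0 → quadraticChar F u = quadraticChar F v → IsSquare (u * v) := by
    intro u v hu hv h
    rw [← quadraticChar_one_iff_isSquare (mul_ne_zero hu hv), map_mul, h, ← pow_two,
      quadraticChar_sq_one hv]
  rcases quadraticChar_dichotomy hx with h1 | h1 <;> rcases quadraticChar_dichotomy hy with h2 | h2 <;>
  rcases quadraticChar_dichotomy hz with h3 | h3 <;>
  first
  | exact Or.inl (key _ _ hx hy (h1.trans h2.symm))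
  | exact Or.inr (Or.inl (key _ _ hx hz (h1.trans h3.symm)))
  | exact Or.inr (Or.inr (key _ _ hy hz (h2.trans h3.symm)))

theorem bc_ne {a b c d t s : F} (hb : b ≠ 0) (hc : c ≠ 0) (ht : t ≠ 0)
    (h1 : a * t^2 + (a*s+d/s) * t + d ≠ 0) (h2 : a * t^2 + (-(a*s+d/s)) * t + d ≠ 0) :
    b*(a*t+d/t) * (c*(a*t+d/t)) ≠ b*(a*s+d/s) * (c*(a*s+d/s)) := by
  intro h
  have e : (a*t+d/t)^2 = (a*s+d/s)^2 := by
    apply mul_left_cancel₀ (mul_ne_zero hb hc)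
    linear_combination h
  rcases sq_eq_sq_iff_eq_or_eq_neg.1 e with e | e
  · apply h2
    rw [← e]; field_simp; ring
  · apply h1
    have : a*s+d/s = -(a*t+d/t) := by rw [e]; ring
    rw [this]; field_simp; ring

theorem top_big [Fintype F] (hq : 14 ≤ Fintype.card F ∨ (8 ≤ Fintype.card F ∧ (2 : F) = 0))
    (hT : ∀ t : F, t ≠ 0 → InK K t 0 0 t⁻¹) {a b c d : F} (h : InK K a b c d)
    (hb : b ≠ 0) (hc : c ≠ 0) (had : a ≠ 0 ∨ d ≠ 0) : K = ⊤ := by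
  suffices ∃ x, x ≠ 0 ∧ InK K 1 x 0 1 by
    obtain ⟨x, hx, hU⟩ := this
    exact top_torus hT hx hU h hc
  have q1 : (a : F) ≠ 0 ∨ ((0, d) : F × F).2 ≠ 0 := had
  have q2 : (a^2 : F) ≠ 0 ∨ ((0, b * c) : F × F).2 ≠ 0 := Or.inr (mul_ne_zero hb hc)
  have good : ∀ t : F, t ≠ 0 → a * t^2 + 0 * t + d ≠ 0 → a^2 * t^2 + 0 * t + b * c ≠ 0 →
      (a^2*t+b*c/t) ≠ 0 ∧ (c*(a*t+d/t)) ≠ 0 := by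
    intro t ht h1 h2
    constructor
    · intro h0; apply h2; field_simp at h0; linear_combination h0
    · intro h0; apply h1
      have h0 := (mul_eq_zero.1 h0).resolve_left hc
      field_simp at h0; linear_combination h0
  obtain ⟨t1, t10, ht1⟩ := avoid [(a, 0, d), (a^2, 0, b*c)]
    (by simp only [List.forall_mem_cons]; exact ⟨q1, q2, by simp⟩)
    (by simp only [List.length_cons, List.length_nil]; omega)
  simp only [List.forall_mem_cons] at ht1
  obtain ⟨g1, g1'⟩ := good t1 t10 ht1.1 ht1.2.1
  have M1 := MtM hT h t10
  rcases hq with hq | ⟨hq, h2⟩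
  · obtain ⟨t2, t20, ht2⟩ := avoid [(a, 0, d), (a^2, 0, b*c), (a, a*t1+d/t1, d), (a, -(a*t1+d/t1), d)]
      (by simp only [List.forall_mem_cons]; exact ⟨q1, q2, had, had, by simp⟩)
      (by simp only [List.length_cons, List.length_nil]; omega)
    simp only [List.forall_mem_cons] at ht2
    obtain ⟨t3, t30, ht3⟩ := avoid [(a, 0, d), (a^2, 0, b*c), (a, a*t1+d/t1, d), (a, -(a*t1+d/t1), d),
        (a, a*t2+d/t2, d), (a, -(a*t2+d/t2), d)]
      (by simp only [List.forall_mem_cons]; exact ⟨q1, q2, had, had, had, had, by simp⟩)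
      (by simp only [List.length_cons, List.length_nil]; omega)
    simp only [List.forall_mem_cons] at ht3
    obtain ⟨g2, g2'⟩ := good t2 t20 ht2.1 ht2.2.1
    obtain ⟨g3, g3'⟩ := good t3 t30 ht3.1 ht3.2.1
    have M2 := MtM hT h t20
    have M3 := MtM hT h t30
    have n12 := bc_ne hb hc t20 ht2.2.2.1 ht2.2.2.2.1
    have n13 := bc_ne hb hc t30 ht3.2.2.1 ht3.2.2.2.1
    have n23 := bc_ne hb hc t30 ht3.2.2.2.2.1 ht3.2.2.2.2.2.1
    rcases isSquare_of_three _ _ _ (mul_ne_zero g1 g1') (mul_ne_zero g2 g2') (mul_ne_zero g3 g3')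
      with hs | hs | hs
    · exact exists_U hT M1 M2 g1 g1' g2 g2' hs n12.symm
    · exact exists_U hT M1 M3 g1 g1' g3 g3' hs n13.symm
    · exact exists_U hT M2 M3 g2 g2' g3 g3' hs n23.symm
  · have hch : ringChar F = 2 := by
      have := ringChar.dvd (R := F) (x := 2) (by exact_mod_cast h2)
      rcases (Nat.dvd_prime Nat.prime_two).1 this with h | h
      · exact absurd h (CharP.ringChar_ne_one)
      · exact h
    obtain ⟨t2, t20, ht2⟩ := avoid [(a, 0, d), (a^2, 0, b*c), (a, a*t1+d/t1, d)]
      (by simp only [List.forall_mem_cons]; exact ⟨q1, q2, had, by simp⟩)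
      (by simp only [List.length_cons, List.length_nil]; omega)
    simp only [List.forall_mem_cons] at ht2
    obtain ⟨g2, g2'⟩ := good t2 t20 ht2.1 ht2.2.1
    have M2 := MtM hT h t20
    have n12 := bc_ne hb hc t20 ht2.2.2.1 (by
      have := ht2.2.2.1
      intro h0; apply this
      linear_combination h0 + (a*t1+d/t1) * t2 * h2)
    exact exists_U hT M1 M2 g1 g1' g2 g2' (FiniteField.isSquare_of_char_two hch _) n12.symm

end gen

section pairs
variable {F : Type} [Field F]

/-- matrix from entries -/
def mkS (a b c d : F) (h : a * d - b * c = 1) : SL2 F :=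
  ⟨!![a, b; c, d], by rw [Matrix.det_fin_two_of]; exact h⟩

theorem mkS_mem {K : Subgroup (SL2 F)} {a b c d : F} {h : a * d - b * c = 1}
    (hm : mkS a b c d h ∈ K) : InK K a b c d := by
  have := InK.of_mem hm
  exact this.cast (by simp [mkS]) (by simp [mkS]) (by simp [mkS]) (by simp [mkS])

theorem cube_one' (g : SL2 F) (ht : g.1 0 0 + g.1 1 1 = -1) : g^3 = 1 := by
  have hd := sl2_det g
  rw [pow_three]
  apply sl2_ext <;> simp [Matrix.mul_apply, Fin.sum_univ_two] <;>
    generalize g.1 0 0 = a at * <;>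
    generalize g.1 0 1 = b at * <;>
    generalize g.1 1 0 = c at * <;>
    generalize g.1 1 1 = d at * <;> grind

theorem cube_one {a b c d : F} (h : a * d - b * c = 1) (ht : a + d = -1) :
    (mkS a b c d h)^3 = 1 := cube_one' _ (by simpa [mkS] using ht)

/-- trace of the commutator -/
def ctr {R : Type} [CommRing R] (g h : Matrix.SpecialLinearGroup (Fin 2) R) : R :=
  (g * h * g⁻¹ * h⁻¹).1 0 0 + (g * h * g⁻¹ * h⁻¹).1 1 1

/-- trace of the commutator in terms of entries -/
def ctrE {R : Type} [CommRing R] (a b c d a' b' c' d' : R) : R :=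
    ((a*a'+b*c')*d - (a*b'+b*d')*c)*d' - (-(a*a'+b*c')*b + (a*b'+b*d')*a)*c'
    - ((c*a'+d*c')*d - (c*b'+d*d')*c)*b' + (-(c*a'+d*c')*b + (c*b'+d*d')*a)*a'

theorem ctr_eq {R : Type} [CommRing R] (g h : Matrix.SpecialLinearGroup (Fin 2) R) :
    ctr g h = ctrE (g.1 0 0) (g.1 0 1) (g.1 1 0) (g.1 1 1)
      (h.1 0 0) (h.1 0 1) (h.1 1 0) (h.1 1 1) := by
  simp [ctr, ctrE, Matrix.SpecialLinearGroup.coe_inv, Matrix.adjugate_fin_two, Matrix.mul_apply,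
    Fin.sum_univ_two]
  ring

theorem ctr_mkS {a b c d a' b' c' d' : F} (h : a * d - b * c = 1) (h' : a' * d' - b' * c' = 1) :
    ctr (mkS a b c d h) (mkS a' b' c' d' h') =
    ((a*a'+b*c')*d - (a*b'+b*d')*c)*d' - (-(a*a'+b*c')*b + (a*b'+b*d')*a)*c'
    - ((c*a'+d*c')*d - (c*b'+d*d')*c)*b' + (-(c*a'+d*c')*b + (c*b'+d*d')*a)*a' := by
  rw [ctr_eq]; simp [mkS, ctrE]

theorem prim [Fintype F] (hq : 2 ≤ Fintype.card F) : ∃ l : F, l ≠ 0 ∧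
    (∀ n, 0 < n → n < Fintype.card F - 1 → l^n ≠ 1) ∧ ∀ t : F, t ≠ 0 → ∃ n : ℕ, t = l^n := by
  classical
  obtain ⟨u, hu⟩ := IsCyclic.exists_monoid_generator (α := Fˣ)
  refine ⟨u, u.ne_zero, ?_, ?_⟩
  · intro n hn hn' h
    have h1 : u^n = 1 := by ext; simpa using h
    have h2 : orderOf u = Fintype.card F - 1 := by
      rw [orderOf_eq_card_of_forall_mem_powers hu, Nat.card_eq_fintype_card, Fintype.card_units]
    have := orderOf_le_of_pow_eq_one hn h1
    omega
  · intro t ht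
    obtain ⟨n, hn⟩ := hu (Units.mk0 t ht)
    refine ⟨n, ?_⟩
    have := congrArg (fun x : Fˣ => (x : F)) hn
    simpa using this.symm

theorem torus_of {K : Subgroup (SL2 F)} {l : F} (hl : l ≠ 0)
    (hl' : ∀ t : F, t ≠ 0 → ∃ n : ℕ, t = l^n) (h : InK K l 0 0 l⁻¹) (t : F) (ht : t ≠ 0) :
    InK K t 0 0 t⁻¹ := by
  have : ∀ n : ℕ, InK K (l^n) 0 0 (l^n)⁻¹ := by
    intro n
    induction n with
    | zero => simpa using InK.one
    | succ n ih =>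
      refine (ih.mul h).cast ?_ ?_ ?_ ?_ <;> simp [pow_succ, mul_comm]
  obtain ⟨n, rfl⟩ := hl' t ht
  exact this n

theorem card_cases [Fintype F] (hq : 5 ≤ Fintype.card F) :
    (Nat.card F).Prime ∨ (Fintype.card F = 9 ∧ (3 : F) = 0) ∨
      (8 ≤ Fintype.card F ∧ (14 ≤ Fintype.card F ∨ (8 ≤ Fintype.card F ∧ (2 : F) = 0))) := by
  by_cases hp : (Nat.card F).Prime
  · exact Or.inl hp
  right
  rw [Nat.card_eq_fintype_card] at hp
  have hpp : IsPrimePow (Fintype.card F) := FiniteField.isPrimePow_card F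
  have h0 : ((Fintype.card F : ℕ) : F) = 0 := FiniteField.cast_card_eq_zero F
  by_cases h14 : 14 ≤ Fintype.card F
  · right; exact ⟨by omega, Or.inl h14⟩
  generalize Fintype.card F = q at *
  have hne : ∀ r s : ℕ, r.Prime → s.Prime → r ≠ s → r ∣ q → s ∣ q → False := by
    intro r s hr hs hrs h1 h2
    obtain ⟨p, k, hpr, hk, rfl⟩ := hpp
    have hp := hpr.nat_prime
    have e1 := (Nat.prime_dvd_prime_iff_eq hr hp).1 (hr.dvd_of_dvd_pow h1)
    have e2 := (Nat.prime_dvd_prime_iff_eq hs hp).1 (hs.dvd_of_dvd_pow h2)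
    exact hrs (e1.trans e2.symm)
  push Not at h14
  interval_cases q
  · exact absurd (by norm_num) hp
  · exact (hne 2 3 (by norm_num) (by norm_num) (by norm_num) (by norm_num) (by norm_num)).elim
  · exact absurd (by norm_num) hp
  · right
    refine ⟨le_refl _, Or.inr ⟨le_refl _, ?_⟩⟩
    have : (2:F)^3 = 0 := by push_cast at h0; linear_combination h0
    exact pow_eq_zero_iff (by norm_num) |>.1 this
  · left
    refine ⟨rfl, ?_⟩
    have : (3:F)^2 = 0 := by push_cast at h0; linear_combination h0
    exact pow_eq_zero_iff (by norm_num) |>.1 this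
  · exact (hne 2 5 (by norm_num) (by norm_num) (by norm_num) (by norm_num) (by norm_num)).elim
  · exact absurd (by norm_num) hp
  · exact (hne 2 3 (by norm_num) (by norm_num) (by norm_num) (by norm_num) (by norm_num)).elim
  · exact absurd (by norm_num) hp

theorem prim9 [Fintype F] (hq : Fintype.card F = 9) (h3 : (3 : F) = 0) :
    ∃ l : F, l ≠ 0 ∧ l^2 = l + 1 ∧ ∀ t : F, t ≠ 0 → ∃ n : ℕ, t = l^n := by
  obtain ⟨l, l0, ln, lt⟩ := prim (F := F) (by omega)
  have l8 : l^8 = 1 := by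
    have := FiniteField.pow_card_sub_one_eq_one l l0
    rwa [hq] at this
  have l4 : l^4 = -1 := by
    have : (l^4-1)*(l^4+1) = 0 := by linear_combination l8
    rcases mul_eq_zero.1 this with h | h
    · exact absurd (by linear_combination h) (ln 4 (by norm_num) (by omega))
    · linear_combination h
  have : (l^2-l-1)*(l^2+l-1) = 0 := by linear_combination l4 - l^2*h3
  rcases mul_eq_zero.1 this with h | h
  · exact ⟨l, l0, by linear_combination h, lt⟩
  · refine ⟨-l, neg_ne_zero.2 l0, by linear_combination h, ?_⟩
    intro t ht
    obtain ⟨n, rfl⟩ := lt t ht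
    refine ⟨5*n, ?_⟩
    rw [pow_mul]
    congr 1
    linear_combination (l) * l4

theorem nonval [Finite F] : ∃ t : F, ∀ z : F, t ≠ z^2 - z := by
  by_contra! h
  have hs : Function.Surjective (fun z : F => z^2 - z) := fun t => by
    obtain ⟨z, hz⟩ := h t
    exact ⟨z, hz.symm⟩
  have hi := Finite.injective_iff_surjective.2 hs
  have : (0:F) = 1 := hi (by simp)
  exact zero_ne_one this

theorem pair1 [Fintype F] (hq : 5 ≤ Fintype.card F) :
    ∃ A B : SL2 F, A^3 = 1 ∧ B^3 = 1 ∧ Subgroup.closure {A, B} = ⊤ := by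
  -- common large construction
  have big : ∀ l : F, l ≠ 0 → l + 1 ≠ 0 →
      ∃ A B : SL2 F, A^3 = 1 ∧ B^3 = 1 ∧
        InK (Subgroup.closure {A, B}) l 0 0 l⁻¹ ∧
        InK (Subgroup.closure {A, B}) (-l/(l+1)) 1 (-(l^2+l+1)/(l+1)^2) (-1/(l+1)) := by
    intro l hl hl1
    have hA : (-l/(l+1)) * (-1/(l+1)) - 1 * (-(l^2+l+1)/(l+1)^2) = 1 := by
      field_simp; ring
    have hB : (-1/(l+1) * l) * (-l/(l+1) * l⁻¹) - (-l⁻¹) * ((l^2+l+1)/(l+1)^2 * l) = 1 := by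
      field_simp; ring
    refine ⟨mkS _ _ _ _ hA, mkS _ _ _ _ hB, cube_one _ ?_, cube_one _ ?_, ?_, ?_⟩
    · field_simp; ring
    · field_simp; ring
    · have h1 := mkS_mem (h := hA) (Subgroup.subset_closure (Set.mem_insert _ _) :
        _ ∈ Subgroup.closure {mkS _ _ _ _ hA, mkS _ _ _ _ hB})
      have h2 := mkS_mem (h := hB) (Subgroup.subset_closure (Set.mem_insert_of_mem _ rfl) :
        _ ∈ Subgroup.closure {mkS _ _ _ _ hA, mkS _ _ _ _ hB})
      refine (h1.mul h2).cast ?_ ?_ ?_ ?_ <;> field_simp <;> ring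
    · exact mkS_mem (h := hA) (Subgroup.subset_closure (Set.mem_insert _ _))
  rcases card_cases hq with hp | ⟨h9, h3⟩ | ⟨h8, hbig⟩
  · have hA : (0:F) * (-1) - (-1) * 1 = 1 := by ring
    have hB : (1:F) * (-2) - (-3) * 1 = 1 := by ring
    refine ⟨mkS _ _ _ _ hA, mkS _ _ _ _ hB, cube_one _ (by ring), cube_one _ (by ring), ?_⟩
    have h1 := mkS_mem (h := hA) (Subgroup.subset_closure (Set.mem_insert _ _) :
        _ ∈ Subgroup.closure {mkS _ _ _ _ hA, mkS _ _ _ _ hB})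
    have h2 := mkS_mem (h := hB) (Subgroup.subset_closure (Set.mem_insert_of_mem _ rfl) :
        _ ∈ Subgroup.closure {mkS _ _ _ _ hA, mkS _ _ _ _ hB})
    have h4 : (-4 : F) ≠ 0 := by
      intro h
      have h22 : (2:F)^2 = 0 := by linear_combination -h
      have h2 : (2:F) = 0 := pow_eq_zero_iff (by norm_num) |>.1 h22
      have h0 : ((Fintype.card F : ℕ) : F) = 0 := FiniteField.cast_card_eq_zero F
      rw [Nat.card_eq_fintype_card] at hp
      obtain ⟨k, hk⟩ := hp.odd_of_ne_two (by omega)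
      rw [hk] at h0
      push_cast at h0
      exact one_ne_zero (α := F) (by linear_combination h0 - k * h2)
    refine top_prime hp h4 ?_ h1 one_ne_zero
    refine ((h1.mul h2).mul (h1.mul h2)).cast ?_ ?_ ?_ ?_ <;> ring
  · obtain ⟨l, l0, l2, lt⟩ := prim9 h9 h3
    have l1 : l + 1 ≠ 0 := by rw [← l2]; exact pow_ne_zero _ l0
    obtain ⟨A, B, hA, hB, hD, hM⟩ := big l l0 l1
    refine ⟨A, B, hA, hB, ?_⟩
    have hT := torus_of l0 lt hD
    have hM' : InK (Subgroup.closure {A, B}) (1 - l) 1 (-1-l) (1+l) := by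
      refine hM.cast ?_ rfl ?_ ?_ <;> field_simp <;> grind
    have hN : InK (Subgroup.closure {A, B}) (-1) (-1+l) (-l) 0 := by
      refine (MtM hT hM' l0).cast ?_ ?_ ?_ ?_ <;> field_simp <;> grind
    have n1 : (1 - l) ≠ 0 := by grind
    have n2 : (-1-l) ≠ 0 := by grind
    obtain ⟨x, hx, hU⟩ := exists_U hT hM' hN n1 n2 (by simp) (by simpa using l0)
      ⟨l, by grind⟩ (by grind)
    exact top_torus hT hx hU hM' n2
  · obtain ⟨l, l0, ln, lt⟩ := prim (F := F) (by omega)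
    have l2 := ln 2 (by norm_num) (by omega)
    have l3 := ln 3 (by norm_num) (by omega)
    have l1 : l + 1 ≠ 0 := by
      intro h; apply l2; linear_combination (l - 1) * h
    have l4 : l^2 + l + 1 ≠ 0 := by
      intro h; apply l3; linear_combination (l - 1) * h
    obtain ⟨A, B, hA, hB, hD, hM⟩ := big l l0 l1
    refine ⟨A, B, hA, hB, ?_⟩
    exact top_big hbig (torus_of l0 lt hD) hM one_ne_zero
      (div_ne_zero (neg_ne_zero.2 l4) (pow_ne_zero _ l1))
      (Or.inl (div_ne_zero (neg_ne_zero.2 l0) l1))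

theorem pair2 [Fintype F] (hq : 5 ≤ Fintype.card F) :
    ∃ A B : SL2 F, Subgroup.closure {A, B} = ⊤ ∧ ∀ z : F, ctr A B ≠ z^2 - z := by
  rcases card_cases hq with hp | ⟨h9, h3⟩ | ⟨h8, hbig⟩
  · have h2 : (2 : F) ≠ 0 ∧ (3 : F) ≠ 0 := by
      rw [Nat.card_eq_fintype_card] at hp
      have h0 : ((Fintype.card F : ℕ) : F) = 0 := FiniteField.cast_card_eq_zero F
      have key : ∀ r : ℕ, r.Prime → r ≠ Fintype.card F → (r : F) ≠ 0 := by
        intro r hr hne h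
        have hc := (Nat.coprime_primes hr hp).2 hne
        have := (Nat.isCoprime_iff_coprime.2 hc)
        obtain ⟨u, v, huv⟩ := this
        have := congrArg (fun x : ℤ => (x : F)) huv
        push_cast at this
        rw [h, h0] at this
        simp at this
      exact ⟨by exact_mod_cast key 2 (by norm_num) (by omega),
        by exact_mod_cast key 3 (by norm_num) (by omega)⟩
    obtain ⟨h2, h3⟩ := h2
    have hc : ∃ c : F, ∀ z, 2 + c^2 ≠ z^2 - z := by
      by_contra! hcon
      have hsq : ∀ x : F, IsSquare x → IsSquare (x + 9) := by
        rintro x ⟨r, rfl⟩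
        obtain ⟨z, hz⟩ := hcon (r/2)
        refine ⟨2*z-1, ?_⟩
        field_simp at hz
        linear_combination hz
      have hall : ∀ n : ℕ, IsSquare (n • (9:F)) := by
        intro n
        induction n with
        | zero => simp
        | succ n ih => rw [succ_nsmul]; exact hsq _ ih
      have htop : AddSubgroup.zmultiples (9:F) = ⊤ := by
        have := Fact.mk hp
        rcases (AddSubgroup.zmultiples (9:F)).eq_bot_or_eq_top_of_prime_card with h | h
        · rw [AddSubgroup.zmultiples_eq_bot] at h
          have : (3:F)^2 = 0 := by linear_combination h
          exact absurd (pow_eq_zero_iff (by norm_num) |>.1 this) h3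
        · exact h
      have hsqall : ∀ x : F, IsSquare x := by
        intro x
        have : x ∈ AddSubgroup.zmultiples (9:F) := by rw [htop]; trivial
        rw [← mem_multiples_iff_mem_zmultiples] at this
        obtain ⟨n, hn⟩ := this
        rw [← hn]; exact hall n
      have hs : Function.Surjective (fun z : F => z^2) := fun t => by
        obtain ⟨z, hz⟩ := hsqall t
        exact ⟨z, by simp only; rw [hz, pow_two]⟩
      have hi := Finite.injective_iff_surjective.2 hs
      have : (1:F) = -1 := hi (by simp)
      exact h2 (by linear_combination this)
    obtain ⟨c, hc⟩ := hc
    have c0 : c ≠ 0 := by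
      rintro rfl
      exact hc 2 (by ring)
    have hA : (1:F) * 1 - 1 * 0 = 1 := by ring
    have hB : (0:F) * 0 - (-c⁻¹) * c = 1 := by field_simp; ring
    refine ⟨mkS _ _ _ _ hA, mkS _ _ _ _ hB, ?_, ?_⟩
    · exact top_prime hp one_ne_zero (mkS_mem (Subgroup.subset_closure (Set.mem_insert _ _)))
        (mkS_mem (h := hB) (Subgroup.subset_closure (Set.mem_insert_of_mem _ rfl))) c0
    · intro z
      rw [ctr_mkS]
      convert hc z using 1
      field_simp
      ring
  · obtain ⟨l, l0, l2, lt⟩ := prim9 h9 h3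
    have hA : l * l⁻¹ - 0 * 0 = 1 := by field_simp; ring
    have hB : (1 + l) * 1 - l * 1 = 1 := by ring
    refine ⟨mkS _ _ _ _ hA, mkS _ _ _ _ hB, ?_, ?_⟩
    · have h1 := mkS_mem (h := hA) (Subgroup.subset_closure (Set.mem_insert _ _) :
        _ ∈ Subgroup.closure {mkS _ _ _ _ hA, mkS _ _ _ _ hB})
      have h2 := mkS_mem (h := hB) (Subgroup.subset_closure (Set.mem_insert_of_mem _ rfl) :
        _ ∈ Subgroup.closure {mkS _ _ _ _ hA, mkS _ _ _ _ hB})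
      have hT := torus_of l0 lt h1
      have hN := (h2.mul h2).cast (a' := -1 + l) (b' := 1) (c' := -1+l) (d' := 1+l)
        (by grind) (by grind) (by grind) (by grind)
      obtain ⟨x, hx, hU⟩ := exists_U hT h2 hN (by grind) one_ne_zero (by grind) (by grind)
        ⟨1, by grind⟩ (by grind)
      exact top_torus hT hx hU h2 one_ne_zero
    · intro z h
      have e : l⁻¹ = l - 1 := by field_simp; grind
      rw [ctr_mkS, e] at h
      have hr : (2*z-1)^2 = -l := by grind
      have r0 : 2*z-1 ≠ 0 := by
        intro h0; rw [h0] at hr; apply l0; linear_combination hr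
      have r8 := FiniteField.pow_card_sub_one_eq_one _ r0
      rw [h9] at r8
      have : l^4 = 1 := by
        have : (2*z-1)^8 = ((2*z-1)^2)^4 := by ring
        rw [show 9 - 1 = 8 from rfl, this, hr] at r8
        linear_combination r8
      have h4 : l^4 = -1 := by grind
      grind
  · obtain ⟨l, l0, ln, lt⟩ := prim (F := F) (by omega)
    have l2 := ln 2 (by norm_num) (by omega)
    obtain ⟨t, ht⟩ := nonval (F := F)
    have l1 : l - l⁻¹ ≠ 0 := by
      intro h; apply l2; field_simp at h; linear_combination h
    set s := (2 - t) / (l - l⁻¹)^2 with hs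
    have hs' : s * (l - l⁻¹)^2 = 2 - t := by rw [hs]; field_simp
    have s0 : s ≠ 0 := by
      intro h0
      rw [h0] at hs'
      exact ht 2 (by linear_combination hs')
    have hA : l * l⁻¹ - 0 * 0 = 1 := by field_simp; ring
    have hB : (1 + s) * 1 - s * 1 = 1 := by ring
    refine ⟨mkS _ _ _ _ hA, mkS _ _ _ _ hB, ?_, ?_⟩
    · have h1 := mkS_mem (h := hA) (Subgroup.subset_closure (Set.mem_insert _ _) :
        _ ∈ Subgroup.closure {mkS _ _ _ _ hA, mkS _ _ _ _ hB})
      have h2 := mkS_mem (h := hB) (Subgroup.subset_closure (Set.mem_insert_of_mem _ rfl) :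
        _ ∈ Subgroup.closure {mkS _ _ _ _ hA, mkS _ _ _ _ hB})
      exact top_big hbig (torus_of l0 lt h1) h2 s0 one_ne_zero (Or.inr one_ne_zero)
    · intro z h
      apply ht z
      rw [← h, ctr_mkS]
      have e : l * l⁻¹ = 1 := by field_simp
      generalize l⁻¹ = m at *
      linear_combination hs' - 2 * e
end pairs

section rep
open Matrix

theorem fricke {R : Type} [CommRing R] (g h : SpecialLinearGroup (Fin 2) R) :
    ctr g h = (trace g.1)^2 + (trace h.1)^2 + (trace (g.1 * h.1))^2
      - trace g.1 * trace h.1 * trace (g.1 * h.1) - 2 := by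
  have hg := g.2
  have hh := h.2
  rw [det_fin_two] at hg hh
  rw [ctr_eq, ctrE]
  simp only [trace_fin_two, Matrix.mul_apply, Fin.sum_univ_two]
  generalize g.1 0 0 = a at *
  generalize g.1 0 1 = b at *
  generalize g.1 1 0 = c at *
  generalize g.1 1 1 = d at *
  generalize h.1 0 0 = a' at *
  generalize h.1 0 1 = b' at *
  generalize h.1 1 0 = c' at *
  generalize h.1 1 1 = d' at *
  grind

variable {R : Type} [CommRing R]

/-- the four basic elements -/
def bas (X Y : Matrix (Fin 2) (Fin 2) R) : Fin 4 → Matrix (Fin 2) (Fin 2) R :=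
  ![1, X, Y, X * Y]

/-- flattened -/
def flat (X Y : Matrix (Fin 2) (Fin 2) R) : Matrix (Fin 4) (Fin 4) R :=
  Matrix.of fun i k => bas X Y i (![0,0,1,1] k) (![0,1,0,1] k)

theorem det4 {R : Type} [CommRing R] (a b c d a' b' c' d' x y z w : R) :
  det !![1, 0, 0, 1; a, b, c, d; a', b', c', d'; x,y,z,w] = b*(c'*w-d'*z) -c*(b'*w-d'*y)+d*(b'*z-c'*y) - (a*(b'*z-c'*y)-b*(a'*z-c'*x)+c*(a'*y-b'*x)) := by
  rw [Matrix.det_succ_row_zero]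
  simp only [Fin.sum_univ_four, det_fin_three, submatrix_apply]
  have h1 : (0:Fin 4).succAbove = ![1,2,3] := by decide
  have h2 : (1:Fin 4).succAbove = ![0,2,3] := by decide
  have h3 : (2:Fin 4).succAbove = ![0,1,3] := by decide
  have h4 : (3:Fin 4).succAbove = ![0,1,2] := by decide
  rw [h1, h2, h3, h4]
  simp
  ring

theorem det_flat (g h : SpecialLinearGroup (Fin 2) R) : (flat g.1 h.1).det = 2 - ctr g h := by
  have hg := g.2
  have hh := h.2
  rw [det_fin_two] at hg hh
  rw [ctr_eq, ctrE]
  have : flat g.1 h.1 = !![1, 0, 0, 1; g.1 0 0, g.1 0 1, g.1 1 0, g.1 1 1;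
      h.1 0 0, h.1 0 1, h.1 1 0, h.1 1 1;
      g.1 0 0 * h.1 0 0 + g.1 0 1 * h.1 1 0, g.1 0 0 * h.1 0 1 + g.1 0 1 * h.1 1 1,
      g.1 1 0 * h.1 0 0 + g.1 1 1 * h.1 1 0, g.1 1 0 * h.1 0 1 + g.1 1 1 * h.1 1 1] := by
    have e : ∀ i j, (g.1 * h.1) i j = g.1 i 0 * h.1 0 j + g.1 i 1 * h.1 1 j := by
      intro i j
      rw [Matrix.mul_apply, Fin.sum_univ_two]
    have e00 : (1 : Matrix (Fin 2) (Fin 2) R) 0 0 = 1 := by simp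
    have e01 : (1 : Matrix (Fin 2) (Fin 2) R) 0 1 = 0 := by simp
    have e10 : (1 : Matrix (Fin 2) (Fin 2) R) 1 0 = 0 := by simp
    have e11 : (1 : Matrix (Fin 2) (Fin 2) R) 1 1 = 1 := by simp
    ext i j
    fin_cases i
    · fin_cases j
      exacts [e00, e01, e10, e11]
    · fin_cases j <;> rfl
    · fin_cases j <;> rfl
    · fin_cases j
      exacts [e 0 0, e 0 1, e 1 0, e 1 1]
  rw [this]
  generalize g.1 0 0 = a at *
  generalize g.1 0 1 = b at *
  generalize g.1 1 0 = c at *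
  generalize g.1 1 1 = d at *
  generalize h.1 0 0 = a' at *
  generalize h.1 0 1 = b' at *
  generalize h.1 1 0 = c' at *
  generalize h.1 1 1 = d' at *
  rw [det4]
  grind

theorem span_mul (X Y : SpecialLinearGroup (Fin 2) R) (m : Matrix (Fin 2) (Fin 2) R)
    (hm : m ∈ Submodule.span R (Set.range (bas X.1 Y.1))) :
    m * X.1 ∈ Submodule.span R (Set.range (bas X.1 Y.1)) ∧
    m * Y.1 ∈ Submodule.span R (Set.range (bas X.1 Y.1)) := by
  have hX := X.2
  have hY := Y.2
  rw [det_fin_two] at hX hY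
  set S := Submodule.span R (Set.range (bas X.1 Y.1)) with hS
  have m0 : 1 ∈ S := Submodule.subset_span ⟨0, rfl⟩
  have m1 : X.1 ∈ S := Submodule.subset_span ⟨1, rfl⟩
  have m2 : Y.1 ∈ S := Submodule.subset_span ⟨2, rfl⟩
  have m3 : X.1 * Y.1 ∈ S := Submodule.subset_span ⟨3, rfl⟩
  have eXX : X.1 * X.1 = (trace X.1) • X.1 - 1 := by
    ext i j
    fin_cases i <;> fin_cases j <;>
      simp [Matrix.mul_apply, Fin.sum_univ_two, trace_fin_two] <;> grind
  have eYY : Y.1 * Y.1 = (trace Y.1) • Y.1 - 1 := by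
    ext i j
    fin_cases i <;> fin_cases j <;>
      simp [Matrix.mul_apply, Fin.sum_univ_two, trace_fin_two] <;> grind
  have eYX : Y.1 * X.1 = (trace Y.1) • X.1 + (trace X.1) • Y.1 +
      (trace (X.1 * Y.1) - trace X.1 * trace Y.1) • 1 - X.1 * Y.1 := by
    ext i j
    fin_cases i <;> fin_cases j <;>
      simp [Matrix.mul_apply, Fin.sum_univ_two, trace_fin_two] <;> ring
  have eXYX : X.1 * Y.1 * X.1 = trace (X.1 * Y.1) • X.1 + Y.1 - (trace Y.1) • 1 := by
    ext i j
    fin_cases i <;> fin_cases j <;>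
      simp [Matrix.mul_apply, Fin.sum_univ_two, trace_fin_two] <;> grind
  constructor
  · have : S ≤ S.comap (LinearMap.mulRight R X.1) := by
      rw [hS, Submodule.span_le]
      rintro _ ⟨i, rfl⟩
      fin_cases i
      · change 1 * X.1 ∈ S; rw [one_mul]; exact m1
      · simp only [bas]
        change X.1 * X.1 ∈ S
        rw [eXX]
        exact S.sub_mem (S.smul_mem _ m1) m0
      · change Y.1 * X.1 ∈ S
        rw [eYX]
        exact S.sub_mem (S.add_mem (S.add_mem (S.smul_mem _ m1) (S.smul_mem _ m2))
          (S.smul_mem _ m0)) m3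
      · change X.1 * Y.1 * X.1 ∈ S
        rw [eXYX]
        exact S.sub_mem (S.add_mem (S.smul_mem _ m1) m2) (S.smul_mem _ m0)
    exact this hm
  · have : S ≤ S.comap (LinearMap.mulRight R Y.1) := by
      rw [hS, Submodule.span_le]
      rintro _ ⟨i, rfl⟩
      fin_cases i
      · change 1 * Y.1 ∈ S; rw [one_mul]; exact m2
      · exact m3
      · change Y.1 * Y.1 ∈ S
        rw [eYY]
        exact S.sub_mem (S.smul_mem _ m2) m0
      · change X.1 * Y.1 * Y.1 ∈ S
        rw [mul_assoc, eYY, mul_sub, mul_one, Matrix.mul_smul]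
        exact S.sub_mem (S.smul_mem _ m3) m1
    exact this hm

theorem sl_inv (X : SpecialLinearGroup (Fin 2) R) : (X⁻¹).1 = trace X.1 • 1 - X.1 := by
  ext i j
  fin_cases i <;> fin_cases j <;>
    simp [SpecialLinearGroup.coe_inv, adjugate_fin_two, trace_fin_two]

theorem span_all (X Y g : SpecialLinearGroup (Fin 2) R) (hg : g ∈ Subgroup.closure {X, Y}) :
    g.1 ∈ Submodule.span R (Set.range (bas X.1 Y.1)) := by
  induction hg using Subgroup.closure_induction_right with
  | one => exact Submodule.subset_span ⟨0, rfl⟩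
  | mul_right x hx y hy ih =>
    rcases hy with rfl | rfl
    · exact (span_mul _ _ _ ih).1
    · exact (span_mul _ _ _ ih).2
  | mul_inv_cancel x hx y hy ih =>
    have e : (x * y⁻¹).1 = x.1 * (y⁻¹).1 := rfl
    rw [e, sl_inv, mul_sub, Matrix.mul_smul, mul_one]
    refine Submodule.sub_mem _ (Submodule.smul_mem _ _ ih) ?_
    rcases hy with rfl | rfl
    · exact (span_mul _ _ _ ih).1
    · exact (span_mul _ _ _ ih).2

theorem delta_dvd (X Y A B : SpecialLinearGroup (Fin 2) R) (hA : A ∈ Subgroup.closure {X, Y})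
    (hB : B ∈ Subgroup.closure {X, Y}) : ctr X Y - 2 ∣ ctr A B - 2 := by
  have h : ∀ i, bas A.1 B.1 i ∈ Submodule.span R (Set.range (bas X.1 Y.1)) := by
    intro i
    fin_cases i
    · exact span_all X Y 1 (one_mem _)
    · exact span_all X Y _ hA
    · exact span_all X Y _ hB
    · exact span_all X Y (A * B) (mul_mem hA hB)
  simp only [Submodule.mem_span_range_iff_exists_fun] at h
  choose C hC using h
  have : flat A.1 B.1 = Matrix.of C * flat X.1 Y.1 := by
    ext i k
    simp only [flat, Matrix.mul_apply, Matrix.of_apply]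
    rw [← hC i]
    simp [Matrix.sum_apply]
  rw [← neg_dvd, ← dvd_neg, neg_sub, neg_sub, ← det_flat, ← det_flat, this, det_mul]
  exact Dvd.intro_left _ rfl

theorem ctr_map {S : Type} [CommRing S] (f : R →+* S) (g h : SpecialLinearGroup (Fin 2) R) :
    ctr (SpecialLinearGroup.map f g) (SpecialLinearGroup.map f h) = f (ctr g h) := by
  rw [ctr_eq, ctr_eq]
  simp [ctrE]

end rep

section rep2
open Matrix

/-- the free product -/
abbrev Gp : Type := Monoid.Coprod (Cyc 3) (Cyc 3)

/-- first generator -/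
def ga : Gp := Monoid.Coprod.inl (Multiplicative.ofAdd 1)
/-- second generator -/
def gb : Gp := Monoid.Coprod.inr (Multiplicative.ofAdd 1)

/-- homomorphism from the cyclic group -/
def cycHom {H : Type} [Group H] (h : H) (hh : h^3 = 1) : Cyc 3 →* H :=
  AddMonoidHom.toMultiplicativeLeft (ZMod.lift 3 ⟨zmultiplesHom (Additive H) (Additive.ofMul h), by
    change (3:ℤ) • Additive.ofMul h = 0
    have : (3:ℤ) • Additive.ofMul h = Additive.ofMul (h^3) := by
      rw [ofMul_pow]; norm_cast
    rw [this, hh]; rfl⟩)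

theorem cycHom_one {H : Type} [Group H] (h : H) (hh : h^3 = 1) :
    cycHom h hh (Multiplicative.ofAdd 1) = h := by
  change Additive.toMul (ZMod.lift 3 _ 1) = h
  rw [show (1 : ZMod 3) = ((1 : ℤ) : ZMod 3) by norm_num, ZMod.lift_coe]
  simp

/-- homomorphism from the free product -/
def gpHom {H : Type} [Group H] (h k : H) (hh : h^3 = 1) (hk : k^3 = 1) : Gp →* H :=
  Monoid.Coprod.lift (cycHom h hh) (cycHom k hk)

theorem gpHom_a {H : Type} [Group H] (h k : H) (hh : h^3 = 1) (hk : k^3 = 1) :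
    gpHom h k hh hk ga = h := by
  rw [gpHom, ga, Monoid.Coprod.lift_apply_inl, cycHom_one]

theorem gpHom_b {H : Type} [Group H] (h k : H) (hh : h^3 = 1) (hk : k^3 = 1) :
    gpHom h k hh hk gb = k := by
  rw [gpHom, gb, Monoid.Coprod.lift_apply_inr, cycHom_one]

theorem cyc_pow (x : Cyc 3) : ∃ n : ℕ, x = (Multiplicative.ofAdd 1)^n := by
  refine ⟨(Multiplicative.toAdd x).val, ?_⟩
  apply Multiplicative.toAdd.injective
  simp

theorem ga_cube : ga^3 = 1 := by
  rw [ga, ← map_pow]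
  have : (Multiplicative.ofAdd (1 : ZMod 3))^3 = 1 := by decide
  rw [this, map_one]

theorem gb_cube : gb^3 = 1 := by
  rw [gb, ← map_pow]
  have : (Multiplicative.ofAdd (1 : ZMod 3))^3 = 1 := by decide
  rw [this, map_one]

theorem gp_closure : Subgroup.closure {ga, gb} = ⊤ := by
  rw [eq_top_iff, ← Monoid.Coprod.range_inl_sup_range_inr, sup_le_iff]
  constructor
  · rintro _ ⟨x, rfl⟩
    obtain ⟨n, rfl⟩ := cyc_pow x
    rw [map_pow]
    have := Subgroup.subset_closure (G := Gp) (Set.mem_insert ga {gb})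
    exact Subgroup.pow_mem _ this n
  · rintro _ ⟨x, rfl⟩
    obtain ⟨n, rfl⟩ := cyc_pow x
    rw [map_pow]
    have := Subgroup.subset_closure (G := Gp) (Set.mem_insert_of_mem ga (Set.mem_singleton gb))
    exact Subgroup.pow_mem _ this n

theorem gp_ext {H : Type} [Group H] (f g : Gp →* H) (h1 : f ga = g ga) (h2 : f gb = g gb) :
    f = g := by
  apply MonoidHom.eq_of_eqOn_top
  rw [← gp_closure]
  apply MonoidHom.eqOn_closure
  rintro x (rfl | rfl)
  · exact h1
  · exact h2

theorem map_mem {H : Type} [Group H] (f : Gp →* H) {x y : Gp}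
    (h : Subgroup.closure {x, y} = ⊤) (g : Gp) : f g ∈ Subgroup.closure {f x, f y} := by
  have : g ∈ Subgroup.closure {x, y} := by rw [h]; trivial
  have h2 := Subgroup.mem_map_of_mem f this
  rwa [MonoidHom.map_closure, Set.image_pair] at h2

theorem cube_gen {R : Type} [CommRing R] (g : SpecialLinearGroup (Fin 2) R)
    (ht : g.1 0 0 + g.1 1 1 = -1) : g^3 = 1 := by
  have hd := g.2
  rw [det_fin_two] at hd
  rw [pow_three]
  ext i j
  fin_cases i <;> fin_cases j <;> simp [Matrix.mul_apply, Fin.sum_univ_two] <;>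
    generalize g.1 0 0 = a at * <;>
    generalize g.1 0 1 = b at * <;>
    generalize g.1 1 0 = c at * <;>
    generalize g.1 1 1 = d at * <;> grind

/-- universal A -/
def uA (R : Type) [CommRing R] : SpecialLinearGroup (Fin 2) R :=
  ⟨!![0, -1; 1, -1], by simp⟩
/-- universal B -/
def uB {R : Type} [CommRing R] (p : R) : SpecialLinearGroup (Fin 2) R :=
  ⟨!![p, -(p^2+p+1); 1, -1-p], by simp; ring⟩

/-- universal rep -/
def uR {R : Type} [CommRing R] (p : R) : Gp →* SpecialLinearGroup (Fin 2) R :=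
  gpHom (uA R) (uB p) (cube_gen _ (by simp [uA])) (cube_gen _ (by simp [uB]))

theorem uR_a {R : Type} [CommRing R] (p : R) : uR p ga = uA R := gpHom_a _ _ _ _
theorem uR_b {R : Type} [CommRing R] (p : R) : uR p gb = uB p := gpHom_b _ _ _ _

theorem sl_map_ext {R S : Type} [CommRing R] [CommRing S] (f : R →+* S)
    (g : SpecialLinearGroup (Fin 2) R) (h : SpecialLinearGroup (Fin 2) S)
    (H : ∀ i j, f (g.1 i j) = h.1 i j) : SpecialLinearGroup.map f g = h := by
  apply Subtype.ext
  ext i j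
  exact H i j

theorem uR_map {R S : Type} [CommRing R] [CommRing S] (f : R →+* S) (p : R) (g : Gp) :
    SpecialLinearGroup.map f (uR p g) = uR (f p) g := by
  have : (SpecialLinearGroup.map f).comp (uR p) = uR (f p) := by
    apply gp_ext
    · simp only [MonoidHom.comp_apply, uR_a]
      apply sl_map_ext
      intro i j
      fin_cases i <;> fin_cases j <;> simp [uA]
    · simp only [MonoidHom.comp_apply, uR_b]
      apply sl_map_ext
      intro i j
      fin_cases i <;> fin_cases j <;> simp [uB]
  exact DFunLike.congr_fun this g

theorem ctr_u {R : Type} [CommRing R] (p : R) :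
    ctr (uA R) (uB p) = (p^2+1)^2 + (p^2+1) := by
  rw [ctr_eq]
  simp [uA, uB, ctrE]
  ring

theorem q8_mul : ∀ a b c d a' b' c' d' : ZMod 3, a*d-b*c=1 → a'*d'-b'*c'=1 →
    (a + d = 0 ∨ (b = 0 ∧ c = 0 ∧ a = d)) → (a' + d' = 0 ∨ (b' = 0 ∧ c' = 0 ∧ a' = d')) →
    ((a*a'+b*c') + (c*b'+d*d') = 0 ∨ ((a*b'+b*d') = 0 ∧ (c*a'+d*c') = 0 ∧
      (a*a'+b*c') = (c*b'+d*d'))) := by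
  decide +kernel

theorem q8_tr : ∀ x y z : ZMod 3, x^2+y^2+z^2-x*y*z-2 = 1 → x = 0 ∧ y = 0 := by decide

theorem q8_closure (X Y g : SpecialLinearGroup (Fin 2) (ZMod 3)) (h : ctr X Y = 1)
    (hg : g ∈ Subgroup.closure {X, Y}) :
    (g.1 0 0 + g.1 1 1 = 0 ∨ (g.1 0 1 = 0 ∧ g.1 1 0 = 0 ∧ g.1 0 0 = g.1 1 1)) := by
  rw [fricke] at h
  obtain ⟨hx, hy⟩ := q8_tr _ _ _ h
  rw [trace_fin_two] at hx hy
  induction hg using Subgroup.closure_induction with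
  | mem x hx' =>
    rcases hx' with rfl | rfl
    · exact Or.inl hx
    · exact Or.inl hy
  | one => right; simp
  | mul x y _ _ h1 h2 =>
    have hxd := x.2
    have hyd := y.2
    rw [det_fin_two] at hxd hyd
    have e : (x * y).1 = x.1 * y.1 := rfl
    rw [e]
    simp only [Matrix.mul_apply, Fin.sum_univ_two]
    exact q8_mul _ _ _ _ _ _ _ _ hxd hyd h1 h2
  | inv x _ h1 =>
    simp [SpecialLinearGroup.coe_inv, adjugate_fin_two]
    grind

open Polynomial in
theorem key_univ (g1 g2 : Gp) (h : Subgroup.closure {g1, g2} = ⊤) :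
    ctr (uR (X : ℤ[X]) g1) (uR (X : ℤ[X]) g2) = ctr (uA ℤ[X]) (uB (X : ℤ[X])) := by
  have d1 := delta_dvd _ _ _ _ (map_mem (uR (X : ℤ[X])) h ga) (map_mem (uR (X : ℤ[X])) h gb)
  have d2 := delta_dvd _ _ _ _ (map_mem (uR (X : ℤ[X])) gp_closure g1)
    (map_mem (uR (X : ℤ[X])) gp_closure g2)
  have as := associated_of_dvd_dvd d2 d1
  obtain ⟨u, hu⟩ := as
  obtain ⟨r, hr, hr'⟩ := Polynomial.isUnit_iff.1 u.isUnit
  rw [← hr', uR_a, uR_b] at hu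
  rcases Int.isUnit_iff.1 hr with rfl | rfl
  · simp at hu
    exact hu.symm
  · exfalso
    obtain ⟨f, fX⟩ : ∃ f : ℤ[X] →+* ZMod 3, f X = 1 :=
      ⟨Polynomial.eval₂RingHom (Int.castRingHom _) 1, by simp⟩
    have f2 : f 2 = 2 := map_ofNat f 2
    have fC : f (C (-1)) = -1 := by rw [C_neg, C_1, map_neg, map_one]
    have e := congrArg f hu
    rw [map_mul, map_sub, map_sub, ← ctr_map f (uR X g1), uR_map, uR_map, fX, ctr_u] at e
    rw [f2, fC] at e
    simp only [map_add, map_pow, map_one, fX] at e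
    have e1 : ctr (uR (1 : ZMod 3) g1) (uR (1 : ZMod 3) g2) = 1 := by
      generalize ctr (uR (1 : ZMod 3) g1) (uR (1 : ZMod 3) g2) = t at *
      revert e
      revert t
      decide
    have := q8_closure _ _ _ e1 (map_mem (uR (1 : ZMod 3)) h ga)
    rw [uR_a] at this
    simp [uA] at this

theorem key_spec {R : Type} [CommRing R] (p : R) (g1 g2 : Gp)
    (h : Subgroup.closure {g1, g2} = ⊤) :
    ctr (uR p g1) (uR p g2) = ctr (uR p ga) (uR p gb) := by
  obtain ⟨f, hf⟩ : ∃ f : Polynomial ℤ →+* R, f Polynomial.X = p :=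
    ⟨Polynomial.eval₂RingHom (Int.castRingHom R) p, by simp⟩
  have e := congrArg f (key_univ g1 g2 h)
  rw [← uR_a Polynomial.X, ← uR_b, ← ctr_map, ← ctr_map, uR_map, uR_map, uR_map, uR_map, hf] at e
  exact e

end rep2

section rep3
open Matrix

theorem exists_eigvec {K : Type} [Field K] [IsAlgClosed K] (M : Matrix (Fin 2) (Fin 2) K) :
    ∃ (v : Fin 2 → K) (l : K), v ≠ 0 ∧ M *ᵥ v = l • v := by
  obtain ⟨l, hl⟩ := Module.End.exists_eigenvalue (Matrix.toLin' M)
  obtain ⟨v, hv⟩ := hl.exists_hasEigenvector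
  refine ⟨v, l, hv.2, ?_⟩
  have := hv.apply_eq_smul
  simpa using this

/-- common eigenvector case -/
theorem common {K : Type} [Field K] (θ : Gp →* SL2 K) (v : Fin 2 → K) (hv : v ≠ 0) (l m : K)
    (ha : (θ ga).1 *ᵥ v = l • v) (hb : (θ gb).1 *ᵥ v = m • v) (g h : Gp) :
    ctr (θ g) (θ h) = 2 := by
  have invol : ∀ (x : SL2 K) (c : K), x.1 *ᵥ v = c • v → ∃ c', c * c' = 1 ∧
      (x⁻¹).1 *ᵥ v = c' • v := by
    intro x c hc
    have e : (x⁻¹).1 *ᵥ (x.1 *ᵥ v) = v := by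
      rw [Matrix.mulVec_mulVec]
      have : (x⁻¹).1 * x.1 = (x⁻¹ * x).1 := rfl
      rw [this, inv_mul_cancel]
      exact Matrix.one_mulVec v
    rw [hc, Matrix.mulVec_smul] at e
    have c0 : c ≠ 0 := by
      rintro rfl
      rw [zero_smul] at e
      exact hv e.symm
    refine ⟨c⁻¹, mul_inv_cancel₀ c0, ?_⟩
    conv_rhs => rw [← e]
    rw [smul_smul, inv_mul_cancel₀ c0, one_smul]
  have mulv : ∀ (x y : SL2 K) (c d : K), x.1 *ᵥ v = c • v → y.1 *ᵥ v = d • v →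
      (x * y).1 *ᵥ v = (c * d) • v := by
    intro x y c d hx hy
    have : (x * y).1 = x.1 * y.1 := rfl
    rw [this, ← Matrix.mulVec_mulVec, hy, Matrix.mulVec_smul, hx, smul_smul, mul_comm]
  have all : ∀ g : Gp, ∃ c : K, (θ g).1 *ᵥ v = c • v := by
    intro g
    have hg : g ∈ Subgroup.closure {ga, gb} := by rw [gp_closure]; trivial
    induction hg using Subgroup.closure_induction with
    | mem x hx =>
      rcases hx with rfl | rfl
      · exact ⟨l, ha⟩
      · exact ⟨m, hb⟩
    | one => exact ⟨1, by rw [map_one, one_smul]; exact Matrix.one_mulVec v⟩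
    | mul x y _ _ h1 h2 =>
      obtain ⟨c, hc⟩ := h1
      obtain ⟨d, hd⟩ := h2
      exact ⟨c * d, by rw [map_mul]; exact mulv _ _ _ _ hc hd⟩
    | inv x _ h1 =>
      obtain ⟨c, hc⟩ := h1
      obtain ⟨c', _, hc'⟩ := invol _ _ hc
      exact ⟨c', by rw [map_inv]; exact hc'⟩
  obtain ⟨c, hc⟩ := all g
  obtain ⟨d, hd⟩ := all h
  obtain ⟨c', ec, hc'⟩ := invol _ _ hc
  obtain ⟨d', ed, hd'⟩ := invol _ _ hd
  have e := mulv _ _ _ _ (mulv _ _ _ _ (mulv _ _ _ _ hc hd) hc') hd'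
  have : c * d * c' * d' = 1 := by linear_combination c * c' * ed + ec
  rw [this, one_smul] at e
  unfold ctr
  generalize θ g * θ h * (θ g)⁻¹ * (θ h)⁻¹ = C at *
  have hd := sl2_det C
  have h0 := congrFun e 0
  have h1 := congrFun e 1
  simp only [Matrix.mulVec, dotProduct, Fin.sum_univ_two] at h0 h1
  have : v 0 ≠ 0 ∨ v 1 ≠ 0 := by
    by_contra! hc
    apply hv
    ext i
    fin_cases i
    · exact hc.1
    · exact hc.2
  generalize C.1 0 0 = p at *
  generalize C.1 0 1 = q at *
  generalize C.1 1 0 = r at *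
  generalize C.1 1 1 = s at *
  rcases this with hv | hv <;> apply mul_left_cancel₀ hv
  · linear_combination  v 0 * hd + (1 - s) * h0 + q * h1
  · linear_combination  v 1 * hd + (1 - p) * h1 + r * h0

/-- conjugation invariance -/
theorem conj_ctr {K : Type} [Field K] (θ ρ : Gp →* SL2 K) (P : Matrix (Fin 2) (Fin 2) K)
    (hP : P.det ≠ 0) (ha : (θ ga).1 * P = P * (ρ ga).1) (hb : (θ gb).1 * P = P * (ρ gb).1)
    (g h : Gp) : ctr (θ g) (θ h) = ctr (ρ g) (ρ h) := by
  have all : ∀ g : Gp, (θ g).1 * P = P * (ρ g).1 := by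
    intro g
    have hg : g ∈ Subgroup.closure {ga, gb} := by rw [gp_closure]; trivial
    induction hg using Subgroup.closure_induction with
    | mem x hx =>
      rcases hx with rfl | rfl
      · exact ha
      · exact hb
    | one =>
      rw [map_one, map_one]
      change 1 * P = P * 1
      simp
    | mul x y _ _ h1 h2 =>
      rw [map_mul, map_mul]
      change (θ x).1 * (θ y).1 * P = P * ((ρ x).1 * (ρ y).1)
      rw [mul_assoc, h2, ← mul_assoc, h1, mul_assoc]
    | inv x _ h1 =>
      rw [map_inv, map_inv]
      have e1 : (θ x)⁻¹.1 * (θ x).1 = 1 := by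
        have : (θ x)⁻¹.1 * (θ x).1 = ((θ x)⁻¹ * θ x).1 := rfl
        rw [this, inv_mul_cancel]; rfl
      have e2 : (ρ x).1 * (ρ x)⁻¹.1 = 1 := by
        have : (ρ x).1 * (ρ x)⁻¹.1 = (ρ x * (ρ x)⁻¹).1 := rfl
        rw [this, mul_inv_cancel]; rfl
      calc (θ x)⁻¹.1 * P = (θ x)⁻¹.1 * (P * ((ρ x).1 * (ρ x)⁻¹.1)) := by rw [e2, mul_one]
        _ = (θ x)⁻¹.1 * ((P * (ρ x).1) * (ρ x)⁻¹.1) := by rw [mul_assoc]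
        _ = ((θ x)⁻¹.1 * (θ x).1) * P * (ρ x)⁻¹.1 := by rw [← h1]; simp only [mul_assoc]
        _ = P * (ρ x)⁻¹.1 := by rw [e1, one_mul]
  have e := all (g * h * g⁻¹ * h⁻¹)
  simp only [map_mul, map_inv] at e
  unfold ctr
  generalize θ g * θ h * (θ g)⁻¹ * (θ h)⁻¹ = C at *
  generalize ρ g * ρ h * (ρ g)⁻¹ * (ρ h)⁻¹ = D at *
  rw [← trace_fin_two, ← trace_fin_two]
  have hu : IsUnit P.det := isUnit_iff_ne_zero.2 hP
  have : C.1 = P * D.1 * P⁻¹ := by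
    rw [← e, mul_assoc, Matrix.mul_nonsing_inv _ hu, mul_one]
  rw [this, mul_assoc, trace_mul_comm, mul_assoc, Matrix.nonsing_inv_mul _ hu, mul_one]

theorem cube_dich {K : Type} [Field K] (g : SL2 K) (h : g^3 = 1) :
    g = 1 ∨ g.1 0 0 + g.1 1 1 = -1 := by
  by_cases ht : g.1 0 0 + g.1 1 1 = -1
  · exact Or.inr ht
  left
  have hd := sl2_det g
  have e : g * g * g = 1 := by rw [← h, pow_three, mul_assoc]
  have e' : g.1 * g.1 * g.1 = 1 := congrArg Subtype.val e
  have c00 := congrFun (congrFun e' 0) 0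
  have c01 := congrFun (congrFun e' 0) 1
  have c10 := congrFun (congrFun e' 1) 0
  have c11 := congrFun (congrFun e' 1) 1
  simp [Matrix.mul_apply, Fin.sum_univ_two] at c00 c01 c10 c11
  apply sl2_ext
  all_goals
    simp
    generalize g.1 0 0 = p at *
    generalize g.1 0 1 = q at *
    generalize g.1 1 0 = r at *
    generalize g.1 1 1 = s at *
    have ht' : p + s + 1 ≠ 0 := fun h => ht (by linear_combination h)
    have b1 : (p + s - 1) * q = 0 := by
      apply mul_left_cancel₀ ht'
      grind
    have b2 : (p + s - 1) * r = 0 := by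
      apply mul_left_cancel₀ ht'
      grind
    have b3 : (p + s - 1) * p = 1 := by
      apply mul_left_cancel₀ ht'
      grind
    have b4 : (p + s - 1) * s = 1 := by
      apply mul_left_cancel₀ ht'
      grind
    grind

theorem key_K {K : Type} [Field K] [IsAlgClosed K] (θ : Gp →* SL2 K) (g1 g2 : Gp)
    (h : Subgroup.closure {g1, g2} = ⊤) :
    ctr (θ g1) (θ g2) = 2 ∨ (ctr (θ g1) (θ g2) = ctr (θ ga) (θ gb) ∧
      trace (θ ga).1 = -1 ∧ trace (θ gb).1 = -1) := by
  have ca : (θ ga)^3 = 1 := by rw [← map_pow, ga_cube, map_one]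
  have cb : (θ gb)^3 = 1 := by rw [← map_pow, gb_cube, map_one]
  rcases cube_dich _ ca with ta | ta
  · left
    obtain ⟨v, l, hv, hl⟩ := exists_eigvec (θ gb).1
    refine common θ v hv 1 l ?_ hl g1 g2
    rw [ta, one_smul]
    exact Matrix.one_mulVec v
  rcases cube_dich _ cb with tb | tb
  · left
    obtain ⟨v, l, hv, hl⟩ := exists_eigvec (θ ga).1
    refine common θ v hv l 1 hl ?_ g1 g2
    rw [tb, one_smul]
    exact Matrix.one_mulVec v
  obtain ⟨v, p, hv, hp⟩ := exists_eigvec ((θ gb).1 - (θ ga).1)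
  have hb : (θ gb).1 *ᵥ v = (θ ga).1 *ᵥ v + p • v := by
    rw [← hp, Matrix.sub_mulVec]; abel
  by_cases hl : ∃ l : K, (θ ga).1 *ᵥ v = l • v
  · obtain ⟨l, hl⟩ := hl
    left
    refine common θ v hv l (l + p) hl ?_ g1 g2
    rw [hb, hl, add_smul]
  right
  refine ⟨?_, by rw [trace_fin_two]; exact ta, by rw [trace_fin_two]; exact tb⟩
  have da := sl2_det (θ ga)
  have db := sl2_det (θ gb)
  have b0 := congrFun hb 0
  have b1 := congrFun hb 1
  let P : Matrix (Fin 2) (Fin 2) K := !![v 0, ((θ ga).1 *ᵥ v) 0; v 1, ((θ ga).1 *ᵥ v) 1]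
  have hP : P.det ≠ 0 := by
    intro h0
    simp only [P, det_fin_two_of] at h0
    apply hl
    generalize (θ ga).1 *ᵥ v = w at *
    by_cases hv0 : v 0 = 0
    · have hv1 : v 1 ≠ 0 := by
        intro hv1
        apply hv
        ext i
        fin_cases i
        · exact hv0
        · exact hv1
      refine ⟨w 1 / v 1, ?_⟩
      ext i
      fin_cases i
      · simp [hv0] at h0 ⊢
        tauto
      · simp [hv1]
    · refine ⟨w 0 / v 0, ?_⟩
      ext i
      fin_cases i
      · simp [hv0]
      · simp
        field_simp
        linear_combination h0
  have A1 : (θ ga).1 * P = P * (uR p ga).1 := by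
    rw [uR_a]
    ext i j
    fin_cases i <;> fin_cases j <;>
      simp [P, uA, Matrix.mul_apply, Fin.sum_univ_two, Matrix.mulVec, dotProduct] <;> grind
  have B1 : (θ gb).1 * P = P * (uR p gb).1 := by
    rw [uR_b]
    simp [Matrix.mulVec, dotProduct] at b0 b1
    ext i j
    fin_cases i <;> fin_cases j <;>
      simp [P, uB, Matrix.mul_apply, Fin.sum_univ_two, Matrix.mulVec, dotProduct] <;> grind
  rw [conj_ctr θ (uR p) P hP A1 B1, conj_ctr θ (uR p) P hP A1 B1]
  exact key_spec p g1 g2 h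

theorem key_F {F : Type} [Field F] (θ : Gp →* SL2 F) (g1 g2 : Gp)
    (h : Subgroup.closure {g1, g2} = ⊤) : ∃ z : F, ctr (θ g1) (θ g2) = z^2 - z := by
  let f := algebraMap F (AlgebraicClosure F)
  have hf : Function.Injective f := f.injective
  have hh := key_K ((SpecialLinearGroup.map f).comp θ) g1 g2 h
  simp only [MonoidHom.comp_apply] at hh
  rw [ctr_map] at hh
  rcases hh with h2 | ⟨h1, ta, tb⟩
  · refine ⟨2, hf ?_⟩
    rw [h2]
    simp only [map_sub, map_pow, map_ofNat]
    ring
  · rw [ctr_map] at h1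
    refine ⟨trace ((θ ga).1 * (θ gb).1), ?_⟩
    rw [hf h1, fricke]
    have ta' : trace (θ ga).1 = -1 := by
      apply hf
      rw [map_neg, map_one, ← ta, trace_fin_two, trace_fin_two, map_add]
      rfl
    have tb' : trace (θ gb).1 = -1 := by
      apply hf
      rw [map_neg, map_one, ← tb, trace_fin_two, trace_fin_two, map_add]
      rfl
    rw [ta', tb']
    ring

theorem center_sq {F : Type} [Field F] (c : SL2 F) (hc : c ∈ Subgroup.center (SL2 F)) :
    c^2 = 1 := by
  obtain ⟨r, hr, h⟩ := Matrix.SpecialLinearGroup.mem_center_iff.1 hc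
  apply Subtype.ext
  change c.1 ^ 2 = 1
  change _ = c.1 at h
  rw [← h, ← map_pow]
  simp only [Fintype.card_fin] at hr
  rw [hr, map_one]

theorem lift_cube {F : Type} [Field F] (x : PSL2 F) (hx : x^3 = 1) :
    ∃ g : SL2 F, g^3 = 1 ∧ (QuotientGroup.mk' (Subgroup.center (SL2 F))) g = x := by
  obtain ⟨g, rfl⟩ := QuotientGroup.mk'_surjective _ x
  have hc : g^3 ∈ Subgroup.center (SL2 F) := by
    rw [← map_pow] at hx
    exact (QuotientGroup.eq_one_iff _).1 hx
  have h2 := center_sq _ hc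
  refine ⟨g^4, ?_, ?_⟩
  · have : (g^4)^3 = ((g^3)^2)^2 := by group
    rw [this, h2, one_pow]
  · rw [map_pow, pow_succ, hx, one_mul]

theorem ctr_center {F : Type} [Field F] (g h g' h' : SL2 F)
    (h1 : (QuotientGroup.mk' (Subgroup.center (SL2 F))) g = QuotientGroup.mk' _ g')
    (h2 : (QuotientGroup.mk' (Subgroup.center (SL2 F))) h = QuotientGroup.mk' _ h') :
    ctr g h = ctr g' h' := by
  obtain ⟨c, hc, rfl⟩ := (QuotientGroup.mk'_eq_mk' _).1 h1
  obtain ⟨d, hd, rfl⟩ := (QuotientGroup.mk'_eq_mk' _).1 h2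
  have : g * c * (h * d) * (g * c)⁻¹ * (h * d)⁻¹ = g * h * g⁻¹ * h⁻¹ := by
    have e1 := fun x => Subgroup.mem_center_iff.1 hc x
    have e2 := fun x => Subgroup.mem_center_iff.1 hd x
    rw [e1 g, e2 h]
    have : c * g * (d * h) * (c * g)⁻¹ * (d * h)⁻¹
      = c * (g * d) * h * g⁻¹ * (c⁻¹ * h⁻¹) * d⁻¹ := by group
    rw [this, e2 g]
    have : c⁻¹ * h⁻¹ = h⁻¹ * c⁻¹ := by
      rw [← _root_.mul_inv_rev, ← _root_.mul_inv_rev, e1 h]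
    rw [this]
    have : c * (d * g) * h * g⁻¹ * (h⁻¹ * c⁻¹) * d⁻¹ =
      c * ((d * (g * h * g⁻¹ * h⁻¹)) * c⁻¹) * d⁻¹ := by group
    rw [this, ← e2 (g * h * g⁻¹ * h⁻¹)]
    have : c * ((g * h * g⁻¹ * h⁻¹ * d) * c⁻¹) * d⁻¹ =
      (c * (g * h * g⁻¹ * h⁻¹ * d)) * c⁻¹ * d⁻¹ := by group
    rw [this, ← e1]
    group
  unfold ctr
  rw [this]

theorem lift_hom {F : Type} [Field F] (θ : Gp →* PSL2 F) :
    ∃ t : Gp →* SL2 F, ∀ g, QuotientGroup.mk' (Subgroup.center (SL2 F)) (t g) = θ g := by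
  obtain ⟨A, hA, hA'⟩ := lift_cube (θ ga) (by rw [← map_pow, ga_cube, map_one])
  obtain ⟨B, hB, hB'⟩ := lift_cube (θ gb) (by rw [← map_pow, gb_cube, map_one])
  refine ⟨gpHom A B hA hB, ?_⟩
  have : (QuotientGroup.mk' (Subgroup.center (SL2 F))).comp (gpHom A B hA hB) = θ := by
    apply gp_ext
    · rw [MonoidHom.comp_apply, gpHom_a, hA']
    · rw [MonoidHom.comp_apply, gpHom_b, hB']
  exact fun g => DFunLike.congr_fun this g

end rep3

/-- for `G = C_3 ∗ C_3` and `H = PSL(2,q)` with `q ≥ 5`, the group `H`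
is a homomorphic image of `G`, and some generating pair of `H` does not lift to a
generating pair of `G` along any homomorphism `G → H`. -/
theorem stmt3 (q : ℕ) (F : Type) [Field F] [Fintype F] (hcard : Fintype.card F = q)
    (hq5 : 5 ≤ q) :
    (∃ φ : Monoid.Coprod (Cyc 3) (Cyc 3) →* PSL2 F, Function.Surjective φ) ∧
    ∃ h1 h2 : PSL2 F, Subgroup.closure {h1, h2} = ⊤ ∧
      ∀ (θ : Monoid.Coprod (Cyc 3) (Cyc 3) →* PSL2 F)
        (g1 g2 : Monoid.Coprod (Cyc 3) (Cyc 3)),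
        Subgroup.closure {g1, g2} = ⊤ → (θ g1, θ g2) ≠ (h1, h2) := by
  subst hcard
  constructor
  · obtain ⟨A, B, hA, hB, hAB⟩ := pair1 hq5
    refine ⟨(QuotientGroup.mk' (Subgroup.center (SL2 F))).comp (gpHom A B hA hB), ?_⟩
    rw [MonoidHom.coe_comp]
    apply (QuotientGroup.mk'_surjective _).comp
    rw [← MonoidHom.range_eq_top, eq_top_iff, ← hAB, Subgroup.closure_le]
    rintro x (rfl | rfl)
    · exact ⟨ga, gpHom_a _ _ _ _⟩
    · exact ⟨gb, gpHom_b _ _ _ _⟩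
  · obtain ⟨A, B, hAB, hne⟩ := pair2 hq5
    refine ⟨QuotientGroup.mk' (Subgroup.center (SL2 F)) A,
      QuotientGroup.mk' (Subgroup.center (SL2 F)) B, ?_, ?_⟩
    · rw [← Set.image_pair, ← MonoidHom.map_closure, hAB, ← MonoidHom.range_eq_map,
        MonoidHom.range_eq_top]
      exact QuotientGroup.mk'_surjective _
    · intro θ g1 g2 hg heq
      obtain ⟨t, ht⟩ := lift_hom θ
      obtain ⟨z, hz⟩ := key_F t g1 g2 hg
      apply hne z
      rw [← hz]
      rw [Prod.mk.injEq] at heq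
      apply ctr_center
      · rw [ht, heq.1]
      · rw [ht, heq.2]
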